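/- Completeness of the Hilbert calculus H with respect to the 4-valued Nmatrix semantics for the minimal modal logic M: for every set of formulas Γ and every formula A, if every valuation v ∈ F that designates all formulas of Γ also designates A, then Γ ⊢_H A. -/

import Mathlib

/-- Formulas of the modal language: propositional variables, negation,
the modality ⊖ (here `box`), and implication. -/
inductive Form : Type
  | var : ℕ → Form
  | neg : Form → Form
  | box : Form → Form
  | imp : Form → Form → Form

/-- A valuation `v = (v1, v2)` over the 4-valued Nmatrix for the minimal modal
logic M: `v1` behaves classically on ¬ and →, and `v1(⊖A) = v2(A)`;
`v2` is otherwise unconstrained. -/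
structure Val where
  v1 : Form → Fin 2
  v2 : Form → Fin 2
  neg_eq : ∀ A, v1 (Form.neg A) = 1 - v1 A
  imp_eq : ∀ A B, v1 (Form.imp A B) = max (1 - v1 A) (v1 B)
  box_eq : ∀ A, v1 (Form.box A) = v2 A

/-- The Hilbert calculus H for the minimal modal logic M. -/
inductive HM : Set Form → Form → Prop
  | hyp {Γ A} : A ∈ Γ → HM Γ A
  | ax1 {Γ} (A B : Form) : HM Γ (A.imp (B.imp A))
  | ax2 {Γ} (A B C : Form) :
      HM Γ ((A.imp (B.imp C)).imp ((A.imp B).imp (A.imp C)))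
  | ax3 {Γ} (A B : Form) : HM Γ ((B.neg.imp A.neg).imp (A.imp B))
  | mp {Γ A B} : HM Γ (A.imp B) → HM Γ A → HM Γ B

/-!
A set of formulas that is maximal among those not deriving `A` is deductively closed and respects
`¬` and `→`, so its characteristic function is classical on these connectives. Since `v2` is free,
`⊖` imposes no condition at all: it suffices to let `v2 B` record the membership of `⊖B`. Extending
a `Γ` with `Γ ⊬ A` to such a set, by Zorn's lemma, therefore yields a valuation refuting `Γ ⊨ A`.
-/

namespace HM

variable {Γ Δ : Set Form} {A B : Form}

theorem mono (hΓΔ : Γ ⊆ Δ) (h : HM Γ A) : HM Δ A := by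
  induction h with
  | hyp hA => exact .hyp (hΓΔ hA)
  | ax1 A B => exact .ax1 A B
  | ax2 A B C => exact .ax2 A B C
  | ax3 A B => exact .ax3 A B
  | mp _ _ ihImp ihA => exact .mp ihImp ihA

theorem weaken (B : Form) (h : HM Γ A) : HM (insert B Γ) A :=
  h.mono (Set.subset_insert B Γ)

theorem hyp_insert (Γ : Set Form) (A : Form) : HM (insert A Γ) A :=
  .hyp (Set.mem_insert A Γ)

theorem exists_finite_subset (h : HM Γ A) : ∃ Δ ⊆ Γ, Δ.Finite ∧ HM Δ A := by
  induction h with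
  | @hyp A hA => exact ⟨{A}, Set.singleton_subset_iff.2 hA, Set.finite_singleton A, .hyp rfl⟩
  | ax1 A B => exact ⟨∅, Set.empty_subset _, Set.finite_empty, .ax1 A B⟩
  | ax2 A B C => exact ⟨∅, Set.empty_subset _, Set.finite_empty, .ax2 A B C⟩
  | ax3 A B => exact ⟨∅, Set.empty_subset _, Set.finite_empty, .ax3 A B⟩
  | mp _ _ ihImp ihA =>
    obtain ⟨Δ₁, hΔ₁, hfin₁, hImp⟩ := ihImp
    obtain ⟨Δ₂, hΔ₂, hfin₂, hA⟩ := ihA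
    exact ⟨Δ₁ ∪ Δ₂, Set.union_subset hΔ₁ hΔ₂, hfin₁.union hfin₂,
      .mp (hImp.mono Set.subset_union_left) (hA.mono Set.subset_union_right)⟩

theorem exists_mem_of_sUnion {c : Set (Set Form)} (hne : c.Nonempty)
    (hc : DirectedOn (· ⊆ ·) c) (h : HM (⋃₀ c) A) : ∃ Γ ∈ c, HM Γ A := by
  obtain ⟨Δ, hΔc, hfin, hΔ⟩ := h.exists_finite_subset
  obtain ⟨Γ, hΓc, hΔΓ⟩ := hc.exists_mem_subset_of_finite_of_subset_sUnion hne hfin hΔc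
  exact ⟨Γ, hΓc, hΔ.mono hΔΓ⟩

theorem imp_self (Γ : Set Form) (A : Form) : HM Γ (A.imp A) :=
  .mp (.mp (.ax2 A (A.imp A) A) (.ax1 A (A.imp A))) (.ax1 A A)

theorem imp_of_right (A : Form) (h : HM Γ B) : HM Γ (A.imp B) :=
  .mp (.ax1 B A) h

theorem imp_of_insert (h : HM (insert A Γ) B) : HM Γ (A.imp B) := by
  induction h with
  | hyp hB =>
    rcases hB with rfl | hB
    · exact imp_self Γ _
    · exact imp_of_right A (.hyp hB)
  | ax1 B C => exact imp_of_right A (.ax1 B C)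
  | ax2 B C D => exact imp_of_right A (.ax2 B C D)
  | ax3 B C => exact imp_of_right A (.ax3 B C)
  | mp _ _ ihImp ihB => exact .mp (.mp (.ax2 _ _ _) ihImp) ihB

theorem imp_of_neg_left (B : Form) (h : HM Γ A.neg) : HM Γ (A.imp B) :=
  .mp (.ax3 A B) (imp_of_right B.neg h)

theorem of_contradiction (B : Form) (hA : HM Γ A) (hnA : HM Γ A.neg) : HM Γ B :=
  .mp (imp_of_neg_left B hnA) hA

theorem of_insert_neg (h : HM (insert A.neg Γ) A) : HM Γ A := by
  have hImp : HM Γ (A.neg.imp (A.imp A).neg) :=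
    imp_of_insert (of_contradiction _ h (hyp_insert Γ A.neg))
  exact .mp (.mp (.ax3 (A.imp A) A) hImp) (imp_self Γ A)

theorem of_neg_neg (h : HM Γ A.neg.neg) : HM Γ A :=
  of_insert_neg (of_contradiction A (hyp_insert Γ A.neg) (h.weaken A.neg))

theorem neg_of_insert (h : HM (insert A Γ) A.neg) : HM Γ A.neg := by
  have hA : HM (insert A.neg.neg Γ) A := of_neg_neg (hyp_insert Γ A.neg.neg)
  exact of_insert_neg (.mp ((imp_of_insert h).weaken A.neg.neg) hA)

theorem of_insert_of_insert_neg (hB : HM (insert B Γ) A) (hnB : HM (insert B.neg Γ) A) :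
    HM Γ A := by
  have hImp : HM (insert A.neg Γ) (B.imp A) := (imp_of_insert hB).weaken A.neg
  have hNegImp : HM (insert A.neg Γ) (B.neg.imp A) := (imp_of_insert hnB).weaken A.neg
  have hNeg : HM (insert A.neg Γ) B.neg :=
    neg_of_insert (of_contradiction B.neg (.mp (hImp.weaken B) (hyp_insert _ B))
      ((hyp_insert Γ A.neg).weaken B))
  exact of_insert_neg (.mp hNegImp hNeg)

end HM

/-- `Δ` is `A`-saturated: it is maximal, with respect to inclusion, among the sets of formulas that
do not derive `A`. These sets play the role of the maximal consistent sets in the canonical model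
construction. -/
def IsSaturated (A : Form) (Δ : Set Form) : Prop :=
  Maximal (fun Δ : Set Form ↦ ¬ HM Δ A) Δ

theorem exists_isSaturated_superset {Γ : Set Form} {A : Form} (h : ¬ HM Γ A) :
    ∃ Δ, Γ ⊆ Δ ∧ IsSaturated A Δ := by
  refine zorn_subset_nonempty {Δ | ¬ HM Δ A} (fun c hc hchain hne ↦ ?_) Γ h
  refine ⟨⋃₀ c, fun hA ↦ ?_, fun Δ ↦ Set.subset_sUnion_of_mem⟩
  obtain ⟨Δ, hΔc, hΔ⟩ := hA.exists_mem_of_sUnion hne hchain.directedOn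
  exact hc hΔc hΔ

namespace IsSaturated

variable {A B C : Form} {Δ : Set Form}

theorem not_derives (hΔ : IsSaturated A Δ) : ¬ HM Δ A :=
  hΔ.prop

theorem derives_insert (hΔ : IsSaturated A Δ) (hB : B ∉ Δ) : HM (insert B Δ) A := by
  by_contra hA
  exact hB (hΔ.le_of_ge hA (Set.subset_insert B Δ) (Set.mem_insert B Δ))

theorem mem_iff_derives (hΔ : IsSaturated A Δ) : B ∈ Δ ↔ HM Δ B := by
  refine ⟨.hyp, fun h ↦ ?_⟩
  by_contra hB
  exact hΔ.not_derives (.mp (HM.imp_of_insert (hΔ.derives_insert hB)) h)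

theorem neg_mem_iff (hΔ : IsSaturated A Δ) : B.neg ∈ Δ ↔ B ∉ Δ := by
  refine ⟨fun hnB hB ↦ hΔ.not_derives (.of_contradiction A (.hyp hB) (.hyp hnB)), fun hB ↦ ?_⟩
  by_contra hnB
  exact hΔ.not_derives
    (.of_insert_of_insert_neg (hΔ.derives_insert hB) (hΔ.derives_insert hnB))

theorem imp_mem_iff (hΔ : IsSaturated A Δ) : B.imp C ∈ Δ ↔ (B ∈ Δ → C ∈ Δ) := by
  refine ⟨fun hImp hB ↦ hΔ.mem_iff_derives.2 (.mp (.hyp hImp) (.hyp hB)), fun h ↦ ?_⟩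
  rw [hΔ.mem_iff_derives]
  by_cases hB : B ∈ Δ
  · exact HM.imp_of_right B (.hyp (h hB))
  · exact HM.imp_of_neg_left C (.hyp (hΔ.neg_mem_iff.2 hB))

/-- The canonical valuation of a saturated set `Δ`: `v1` is the characteristic function of `Δ`, and
`v2 B` is the value that this function takes at `⊖B`. -/
noncomputable def canonicalVal (hΔ : IsSaturated A Δ) : Val where
  v1 := Δ.indicator 1
  v2 B := Δ.indicator 1 B.box
  neg_eq B := by
    by_cases hB : B ∈ Δ <;> simp [hΔ.neg_mem_iff, hB]
  imp_eq B C := by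
    by_cases hB : B ∈ Δ <;> by_cases hC : C ∈ Δ <;> simp [hΔ.imp_mem_iff, hB, hC]
  box_eq _ := rfl

theorem canonicalVal_v1_eq_one_iff (hΔ : IsSaturated A Δ) :
    hΔ.canonicalVal.v1 B = 1 ↔ B ∈ Δ := by
  by_cases hB : B ∈ Δ <;> simp [canonicalVal, hB]

end IsSaturated

/-- Completeness of H w.r.t. the 4-valued Nmatrix semantics for M. -/
theorem completeness_M (Γ : Set Form) (A : Form)
    (h : ∀ v : Val, (∀ B ∈ Γ, v.v1 B = 1) → v.v1 A = 1) :
    HM Γ A := by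
  by_contra hA
  obtain ⟨Δ, hΓΔ, hΔ⟩ := exists_isSaturated_superset hA
  have hΓ : ∀ B ∈ Γ, hΔ.canonicalVal.v1 B = 1 := fun B hB ↦
    hΔ.canonicalVal_v1_eq_one_iff.2 (hΓΔ hB)
  have hAΔ : A ∈ Δ := hΔ.canonicalVal_v1_eq_one_iff.1 (h hΔ.canonicalVal hΓ)
  exact hΔ.not_derives (.hyp hAΔ)
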